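/- Let n, m be positive integers, B > 0, and for each e ∈ [m] let ψ_e : {0,1}^{n+1} → [−B, B]. Define w⋆ ∈ ℝ^m by w⋆_e = 2^{−(n+1)} Σ_{(x,y)∈{0,1}^{n+1}} ψ_e(x,y), and for each s ⊆ [n] define w^{(s)} ∈ ℝ^m by w^{(s)}_e = 2^{−n} Σ_{x∈{0,1}^n} ψ_e(x, p_s(x)). Then Σ_{s⊆[n]} ‖w^{(s)} − w⋆‖₂ ≤ B·√(m·2^n). -/

import Mathlib

/-!
Write `χ_s(x) = (-1)^{p_s(x)}` for the Walsh characters and `g_e(x) = (ψ_e(x,0) - ψ_e(x,1)) / 2`,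
so that `|g_e| ≤ B`. Since `ψ_e(x, p_s(x))` differs from the average of `ψ_e(x, ·)` by
`χ_s(x) g_e(x)`, the `e`-th coordinate of `w^{(s)} - w⋆` is the Fourier coefficient
`2^{-n} ∑ x, χ_s(x) g_e(x)` (`coord_eq`). The orthogonality relation `sum_chi_mul_chi` gives
Parseval's identity (`parseval`), hence `∑ s, ‖w^{(s)} - w⋆‖² ≤ m B²`. Cauchy–Schwarz over the
`2^n` subsets `s` then gives the bound on the sum of norms.
-/

open Finset

/-- The parity function indexed by `s ⊆ [n]` on `{0,1}^n` (encoded by `Bool`):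
`p_s(x) = ⊕_{i∈s} x_i`. -/
def parity {n : ℕ} (s : Finset (Fin n)) (x : Fin n → Bool) : Bool :=
  decide (Odd (s.filter fun i => x i = true).card)

/-- The Walsh character `χ_s(x) = ∏_{i ∈ s} (-1)^{x_i}`. -/
def chi {n : ℕ} (s : Finset (Fin n)) (x : Fin n → Bool) : ℝ :=
  ∏ i ∈ s, (if x i = true then (-1 : ℝ) else 1)

lemma chi_eq_parity {n : ℕ} (s : Finset (Fin n)) (x : Fin n → Bool) :
    chi s x = if parity s x = true then -1 else 1 := by
  unfold chi parity
  rw [Finset.prod_ite]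
  simp only [Finset.prod_const, one_pow, mul_one, decide_eq_true_eq]
  split_ifs with h
  · exact h.neg_one_pow
  · exact (Nat.not_odd_iff_even.mp h).neg_one_pow

/-- Orthogonality over `s`: the sum factors as `∏ i, (1 + (-1)^{x_i + y_i})`. -/
lemma sum_chi_mul_chi {n : ℕ} (x y : Fin n → Bool) :
    ∑ s : Finset (Fin n), chi s x * chi s y = if x = y then (2 : ℝ) ^ n else 0 := by
  unfold chi
  simp only [← Finset.prod_mul_distrib]
  rw [← Finset.powerset_univ, ← Finset.prod_one_add]
  split_ifs with h
  · subst h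
    rw [Finset.prod_congr rfl (g := fun _ => (2 : ℝ))]
    · simp
    · intro i _
      split_ifs <;> norm_num
  · obtain ⟨i, hi⟩ := Function.ne_iff.mp h
    apply Finset.prod_eq_zero (Finset.mem_univ i)
    cases hx : x i <;> cases hy : y i <;> simp_all

lemma parseval {n : ℕ} (g : (Fin n → Bool) → ℝ) :
    ∑ s : Finset (Fin n), (∑ x, chi s x * g x) ^ 2 = 2 ^ n * ∑ x, g x ^ 2 := by
  calc ∑ s : Finset (Fin n), (∑ x, chi s x * g x) ^ 2
      = ∑ s : Finset (Fin n), ∑ x, ∑ y, g x * g y * (chi s x * chi s y) := by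
        refine Finset.sum_congr rfl fun s _ => ?_
        rw [sq, Finset.sum_mul_sum]
        refine Finset.sum_congr rfl fun x _ => Finset.sum_congr rfl fun y _ => ?_
        ring
    _ = ∑ x, ∑ y, g x * g y * ∑ s : Finset (Fin n), chi s x * chi s y := by
        rw [Finset.sum_comm]
        refine Finset.sum_congr rfl fun x _ => ?_
        rw [Finset.sum_comm]
        simp only [Finset.mul_sum]
    _ = 2 ^ n * ∑ x, g x ^ 2 := by
        simp only [sum_chi_mul_chi, mul_ite, mul_zero, Finset.sum_ite_eq, Finset.mem_univ,
          if_true, Finset.mul_sum]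
        refine Finset.sum_congr rfl fun x _ => ?_
        ring

lemma coord_eq {n : ℕ} (f : (Fin n → Bool) × Bool → ℝ) (s : Finset (Fin n)) :
    (∑ x : Fin n → Bool, ((2 : ℝ) ^ n)⁻¹ * f (x, parity s x)) -
        ∑ x : Fin n → Bool, ∑ y : Bool, ((2 : ℝ) ^ (n + 1))⁻¹ * f (x, y) =
      ((2 : ℝ) ^ n)⁻¹ * ∑ x, chi s x * ((f (x, false) - f (x, true)) / 2) := by
  rw [← Finset.sum_sub_distrib, Finset.mul_sum]
  refine Finset.sum_congr rfl fun x _ => ?_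
  rw [chi_eq_parity, Fintype.sum_bool, pow_succ, mul_inv]
  cases parity s x <;> simp <;> ring

/-- For a single coordinate, the squared deviations summed over all `s` are at most `B²`. -/
lemma sum_coord_sq_le {n : ℕ} (B : ℝ) (f : (Fin n → Bool) × Bool → ℝ) (hf : ∀ z, |f z| ≤ B) :
    ∑ s : Finset (Fin n), ((∑ x : Fin n → Bool, ((2 : ℝ) ^ n)⁻¹ * f (x, parity s x)) -
        ∑ x : Fin n → Bool, ∑ y : Bool, ((2 : ℝ) ^ (n + 1))⁻¹ * f (x, y)) ^ 2 ≤ B ^ 2 := by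
  simp only [coord_eq, mul_pow]
  rw [← Finset.mul_sum, parseval]
  have hg : ∑ x : Fin n → Bool, ((f (x, false) - f (x, true)) / 2) ^ 2 ≤ 2 ^ n * B ^ 2 := by
    refine (Finset.sum_le_card_nsmul _ _ (B ^ 2) fun x _ => ?_).trans_eq (by simp)
    have h0 := abs_le.mp (hf (x, false))
    have h1 := abs_le.mp (hf (x, true))
    apply sq_le_sq' <;> linarith
  have h2 : (0 : ℝ) < 2 ^ n := by positivity
  calc ((2 : ℝ) ^ n)⁻¹ ^ 2 * (2 ^ n * ∑ x, ((f (x, false) - f (x, true)) / 2) ^ 2)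
      ≤ ((2 : ℝ) ^ n)⁻¹ ^ 2 * (2 ^ n * (2 ^ n * B ^ 2)) := by gcongr
    _ = B ^ 2 := by field_simp

theorem stmt9 (n m : ℕ) (hn : 0 < n) (hm : 0 < m) (B : ℝ) (hB : 0 < B)
    (ψ : Fin m → (Fin n → Bool) × Bool → ℝ) (hψ : ∀ e z, |ψ e z| ≤ B) :
    -- Σ_{s⊆[n]} ‖w^{(s)} − w⋆‖₂ ≤ B·√(m·2^n)
    ∑ s : Finset (Fin n),
        Real.sqrt (∑ e : Fin m,
          ((∑ x : Fin n → Bool, ((2 : ℝ) ^ n)⁻¹ * ψ e (x, parity s x)) -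
            ∑ x : Fin n → Bool, ∑ y : Bool, ((2 : ℝ) ^ (n + 1))⁻¹ * ψ e (x, y)) ^ 2) ≤
      B * Real.sqrt (m * 2 ^ n) := by
  refine abs_le_of_sq_le_sq ?_ (by positivity) |> le_of_abs_le
  refine sq_sum_le_card_mul_sum_sq.trans ?_
  rw [mul_pow, Real.sq_sqrt (by positivity)]
  simp only [Real.sq_sqrt (Finset.sum_nonneg fun _ _ => sq_nonneg _)]
  rw [Finset.sum_comm]
  have h := Finset.sum_le_card_nsmul Finset.univ _ (B ^ 2)
    fun e _ => sum_coord_sq_le B (ψ e) (hψ e)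
  simp only [Finset.card_univ, Fintype.card_fin, nsmul_eq_mul, Fintype.card_finset] at h ⊢
  push_cast
  calc _ ≤ (2 : ℝ) ^ n * (m * B ^ 2) := by gcongr
    _ = _ := by ring
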